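/- For all integers C ≥ 1 and D ≥ 0, [s_{(2^C,1^D)}] X_{GN_{C+D,C−1} ⊔ K_1} = [s_{(2^{C−1},1^{D+1})}] X_{GN_{C+D,C−1}}, where K_1 is a single isolated vertex and ⊔ denotes disjoint union of graphs; here (2^a,1^b) denotes the partition with a parts equal to 2 followed by b parts equal to 1. -/

import Mathlib

open scoped Classical

/-! ### Cells and Young diagrams -/

/-- A cell of a Young diagram: `(row, column)`, both 0-indexed, rows from the top. -/
abbrev Cell : Type := ℕ × ℕ

/-- The length of row `i` (0-indexed from the top) of the Young diagram of the
partition `lam`, whose parts are arranged in weakly decreasing order. -/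
def rowLen {N : ℕ} (lam : Nat.Partition N) (i : ℕ) : ℕ :=
  ((lam.parts.sort (· ≤ ·)).reverse).getD i 0

/-- The Young diagram of a partition, as a set of cells. -/
def diag {N : ℕ} (lam : Nat.Partition N) : Set Cell :=
  {c : Cell | c.2 < rowLen lam c.1}

/-- The number of rows (the length) of a partition. -/
def numRows {N : ℕ} (lam : Nat.Partition N) : ℕ := Multiset.card lam.parts

/-! ### Chromatic symmetric functions and Schur functions, as monomial-coefficient
functions.  A formal power series of bounded degree in the commuting variables
`x_0, x_1, x_2, …` is recorded by the map sending an exponent vector `μ : ℕ → ℕ`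
(only finitely many nonzero entries ever matter) to the coefficient of the monomial
`∏ i, x_i ^ μ i`.  Colors / tableau entries are positive integers, so the variable
`x_0` is never used. -/

/-- A proper coloring of `G` by positive integers. -/
def IsProperColoring {V : Type*} (G : SimpleGraph V) (f : V → ℕ) : Prop :=
  (∀ v, 0 < f v) ∧ ∀ u v, G.Adj u v → f u ≠ f v

/-- The coefficient of the monomial `∏ i, x_i ^ μ i` in the chromatic symmetric
function `X_G = ∑_{proper colorings f} ∏_{v} x_{f v}`. -/
noncomputable def XCoeff {V : Type*} [Fintype V] (G : SimpleGraph V) (μ : ℕ → ℕ) : ℚ :=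
  Nat.card {f : V → ℕ //
    IsProperColoring G f ∧ ∀ i, Nat.card {v : V // f v = i} = μ i}

/-- A semistandard Young tableau of shape `lam`: positive entries on the diagram
(normalized to `0` off the diagram), weakly increasing along rows, strictly
increasing down columns. -/
def IsSSYT {N : ℕ} (lam : Nat.Partition N) (t : Cell → ℕ) : Prop :=
  (∀ c, c ∉ diag lam → t c = 0) ∧ (∀ c ∈ diag lam, 0 < t c) ∧
  (∀ i j : ℕ, ((i, j + 1) : Cell) ∈ diag lam → t (i, j) ≤ t (i, j + 1)) ∧
  (∀ i j : ℕ, ((i + 1, j) : Cell) ∈ diag lam → t (i, j) < t (i + 1, j))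

/-- The coefficient of the monomial `∏ i, x_i ^ μ i` in the Schur function `s_lam`,
i.e. the number of SSYT of shape `lam` and weight `μ`. -/
noncomputable def schurFn {N : ℕ} (lam : Nat.Partition N) (μ : ℕ → ℕ) : ℚ :=
  Nat.card {t : Cell → ℕ // IsSSYT lam t ∧
    ∀ i, Nat.card {c : Cell // c ∈ diag lam ∧ t c = i} = μ i}

/-- The coefficient `[s_lam] f` of the Schur function `s_lam` in the (unique, when it
exists) expansion `f = ∑_{ν ⊢ N} c_ν s_ν` of a symmetric function `f`, homogeneous of
degree `N`, given by its monomial coefficients. -/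
noncomputable def sCoeff {N : ℕ} (f : (ℕ → ℕ) → ℚ) (lam : Nat.Partition N) : ℚ :=
  if h : ∃ c : Nat.Partition N →₀ ℚ, ∀ μ, f μ = c.sum fun ν a => a * schurFn ν μ
  then h.choose lam else 0

/-! ### Graphs: generalized nets, generalized spiders, disjoint unions -/

/-- The generalized net `GN_{n,m}`: the complete graph on the body `Fin n`, with a
pendant (`Sum.inr j`) attached to the anchor `Sum.inl j` for each `j : Fin m`. -/
def genNet (n m : ℕ) : SimpleGraph (Fin n ⊕ Fin m) :=
  SimpleGraph.fromRel fun a b =>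
    match a, b with
    | Sum.inl _, Sum.inl _ => True
    | Sum.inl i, Sum.inr j => (i : ℕ) = (j : ℕ)
    | Sum.inr _, _ => False

/-- The generalized spider `GS_{n,(2,1^{m-1})}`: the complete graph on the body
`Fin n`, a pendant `Sum.inr (Sum.inl j)` attached to the body vertex `Sum.inl j` for
each `j : Fin m`, and one extra vertex `Sum.inr (Sum.inr 0)` (the special pendant)
attached to the pendant `Sum.inr (Sum.inl 0)`, so that the body vertex `0` (the
special anchor) carries an attached path on two vertices. -/
def genSpider2 (n m : ℕ) : SimpleGraph (Fin n ⊕ (Fin m ⊕ Fin 1)) :=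
  SimpleGraph.fromRel fun a b =>
    match a, b with
    | Sum.inl _, Sum.inl _ => True
    | Sum.inl i, Sum.inr (Sum.inl j) => (i : ℕ) = (j : ℕ)
    | Sum.inr (Sum.inl j), Sum.inr (Sum.inr _) => (j : ℕ) = 0
    | _, _ => False

/-- Disjoint union of two simple graphs. -/
def disjUnion {α β : Type*} (G : SimpleGraph α) (H : SimpleGraph β) :
    SimpleGraph (α ⊕ β) :=
  SimpleGraph.fromRel fun a b =>
    match a, b with
    | Sum.inl a, Sum.inl b => G.Adj a b
    | Sum.inr a, Sum.inr b => H.Adj a b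
    | _, _ => False

/-- The one-vertex graph `K_1`. -/
def K1 : SimpleGraph (Fin 1) := ⊥

/-- The path (= complete graph) on two vertices `P_2`. -/
def P2 : SimpleGraph (Fin 2) := ⊤

/-! ### Operations on partitions -/

/-- `removeOnes lam t` is the partition `lam ∖ 1^t` obtained by deleting `t` parts
equal to `1` from `lam` (junk value if `lam` has fewer than `t` parts equal to `1`). -/
def removeOnes {N : ℕ} (lam : Nat.Partition N) (t : ℕ) : Nat.Partition (N - t) :=
  if h : Multiset.replicate t 1 ≤ lam.parts then
    { parts := lam.parts - Multiset.replicate t 1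
      parts_pos := fun hx =>
        lam.parts_pos (Multiset.mem_of_le (tsub_le_self) hx)
      parts_sum := by
        have h1 : (lam.parts - Multiset.replicate t 1) + Multiset.replicate t 1
            = lam.parts := tsub_add_cancel_of_le h
        have h2 := congrArg Multiset.sum h1
        rw [Multiset.sum_add, Multiset.sum_replicate, lam.parts_sum] at h2
        simp only [smul_eq_mul, mul_one] at h2
        omega }
  else Nat.Partition.indiscrete (N - t)

/-- The partition `(2^a, 1^b)` of `2*a + b`. -/
def twoOne (a b : ℕ) : Nat.Partition (2 * a + b) where
  parts := Multiset.replicate a 2 + Multiset.replicate b 1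
  parts_pos := by
    intro i hi
    rw [Multiset.mem_add] at hi
    rcases hi with hi | hi <;> · rw [Multiset.eq_of_mem_replicate hi]; omega
  parts_sum := by
    rw [Multiset.sum_add, Multiset.sum_replicate, Multiset.sum_replicate]
    simp only [smul_eq_mul, mul_one]
    omega

/-! ### Special rim hook `G`-tabloids -/

/-- Two cells are adjacent if they share an edge. -/
def cellAdj (c d : Cell) : Prop :=
  (c.1 = d.1 ∧ (c.2 + 1 = d.2 ∨ d.2 + 1 = c.2)) ∨
  (c.2 = d.2 ∧ (c.1 + 1 = d.1 ∨ d.1 + 1 = c.1))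

/-- A set of cells is (the diagram of) a Young diagram if it is closed under
decreasing either coordinate. -/
def IsYoungDiag (D : Set Cell) : Prop :=
  ∀ i j i' j' : ℕ, ((i, j) : Cell) ∈ D → i' ≤ i → j' ≤ j → ((i', j') : Cell) ∈ D

/-- A set of cells is connected (via edge-adjacency, within the set). -/
def CellConnected (S : Set Cell) : Prop :=
  ∀ c ∈ S, ∀ d ∈ S, Relation.ReflTransGen (fun a b => a ∈ S ∧ b ∈ S ∧ cellAdj a b) c d

/-- A border strip (= rim hook, as a set of cells): nonempty, connected, and
containing no 2×2 square of cells. -/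
def IsBorderStrip (H : Set Cell) : Prop :=
  H.Nonempty ∧ CellConnected H ∧
    ∀ i j : ℕ, ¬(((i, j) : Cell) ∈ H ∧ ((i + 1, j) : Cell) ∈ H ∧
      ((i, j + 1) : Cell) ∈ H ∧ ((i + 1, j + 1) : Cell) ∈ H)

/-- `H` is a rim hook of the Young diagram `D`: a border strip contained in `D`
whose removal leaves a Young diagram. -/
def IsRimHookOf (D H : Set Cell) : Prop :=
  H ⊆ D ∧ IsBorderStrip H ∧ IsYoungDiag (D \ H)

/-- `IsRemovalSeq L D` says that the sets of cells in the list `L` may be removed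
successively from the diagram `D`, each being a rim hook of what remains, with
nothing left at the end. -/
def IsRemovalSeq : List (Set Cell) → Set Cell → Prop
  | [], D => D = ∅
  | H :: L, D => IsRimHookOf D H ∧ IsRemovalSeq L (D \ H)

/-- A special rim hook `G`-tabloid of shape `lam`, with respect to an order `r` on
the vertices of `G`: the cells of the diagram of `lam` are filled bijectively with
the vertices of `G` (vertex `v` goes in cell `pos v`), and the diagram is tiled by
rim hooks, successively removable, each meeting the first column.  The rim hooks are
recorded by the labelling `hk`, which assigns to each vertex the topmost row in which
its rim hook meets the first column.  The vertices in each rim hook form a stable set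
of `G` and, read from the rim hook's (bottom) cell in the first column — i.e. in
increasing order of the diagonal index `column − row` — they increase with respect
to `r`. -/
structure SRHGTabloid {V : Type*} (G : SimpleGraph V) (r : V → V → Prop)
    {N : ℕ} (lam : Nat.Partition N) where
  /-- the cell occupied by each vertex -/
  pos : V → Cell
  /-- the label of the rim hook containing each vertex: the topmost row in which
  that rim hook meets the first column -/
  hk : V → ℕ
  pos_inj : Function.Injective pos
  pos_range : Set.range pos = diag lam
  hk_mem : ∀ v, ((hk v, 0) : Cell) ∈ pos '' {u | hk u = hk v}
  hk_min : ∀ v i, ((i, 0) : Cell) ∈ pos '' {u | hk u = hk v} → hk v ≤ i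
  removal : ∃ L : List ℕ, L.Nodup ∧ (∀ i, i ∈ L ↔ ∃ v, hk v = i) ∧
    IsRemovalSeq (L.map fun i => pos '' {u | hk u = i}) (diag lam)
  stable : ∀ u v, hk u = hk v → u ≠ v → ¬G.Adj u v
  increasing : ∀ u v, hk u = hk v →
    ((pos u).2 : ℤ) - ((pos u).1 : ℤ) < ((pos v).2 : ℤ) - ((pos v).1 : ℤ) → r u v

/-- The sign of a special rim hook `G`-tabloid: `(-1)` to the total number of north
steps, where a rim hook spanning `k` rows contributes `k - 1` north steps. -/
noncomputable def tabSign {V : Type*} {G : SimpleGraph V} {r : V → V → Prop}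
    {N : ℕ} {lam : Nat.Partition N} (T : SRHGTabloid G r lam) : ℤ :=
  (-1) ^ ∑ i ∈ Finset.range N,
    ({a : ℕ | ∃ v, T.hk v = i ∧ (T.pos v).1 = a}.ncard - 1)

/-- The cells of the head of a tabloid of shape `lam`: the rows of length `≥ 2`. -/
def headCells {N : ℕ} (lam : Nat.Partition N) : Set Cell :=
  {c : Cell | c ∈ diag lam ∧ 2 ≤ rowLen lam c.1}

/-- The cells of the tail of a tabloid of shape `lam`: the rows of length `1`. -/
def tailCells {N : ℕ} (lam : Nat.Partition N) : Set Cell :=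
  {c : Cell | c ∈ diag lam ∧ rowLen lam c.1 = 1}

/-- Two special rim hook `G`-tabloids have the same head: the same cells of the head
are occupied by the same vertices, and the rim hook structure restricted to the head
agrees. -/
def SameHead {V : Type*} {G : SimpleGraph V} {r : V → V → Prop} {N : ℕ}
    {lam : Nat.Partition N} (T T' : SRHGTabloid G r lam) : Prop :=
  (∀ v, T.pos v ∈ headCells lam ↔ T'.pos v ∈ headCells lam) ∧
  (∀ v, T.pos v ∈ headCells lam → T.pos v = T'.pos v) ∧
  (∀ u v, T.pos u ∈ headCells lam → T.pos v ∈ headCells lam →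
    (T.hk u = T.hk v ↔ T'.hk u = T'.hk v))

/-!
Since `X_{G ⊔ K₁} = p₁ X_G`, the Pieri rule for `s₁ = p₁` gives
`[s_λ] X_{G ⊔ K₁} = ∑ [s_κ] X_G` over the shapes `κ` obtained from `λ` by removing one box. For
`λ = (2^C, 1^D)` these are `(2^{C-1}, 1^{D+1})` and, if `D ≥ 1`, `(2^C, 1^{D-1})`. The latter has
fewer than `C + D` rows, so its coefficient vanishes: by triangularity of the Kostka numbers, the
coefficients of shapes with at most `k` rows only depend on the monomials in `k` variables, and no
such monomial with `k < C + D` occurs in `X_G`, as `G` contains a clique of size `C + D`.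

Symmetry, triangularity and the Pieri rule all follow by induction from the branching recursion of
the Kostka numbers, which strips off the horizontal strip of the largest entries.
-/

/-! ### Kostka numbers -/

/-- The shapes obtained from the shape `a` by removing a horizontal strip. Row lengths, like the
weights of tableaux below, are indexed from `0`. -/
noncomputable def interlacing (a : ℕ →₀ ℕ) : Finset (ℕ →₀ ℕ) :=
  (Finset.Iic a).filter fun b => ∀ i, a (i + 1) ≤ b i

/-- The number of semistandard tableaux of shape `a` with `ν i` entries equal to `i + 1` for
`i < n` and no entry exceeding `n`, computed by stripping off the largest entries. It is `0`
when `a` is not weakly decreasing. -/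
noncomputable def kostka (ν : ℕ → ℕ) : ℕ → (ℕ →₀ ℕ) → ℕ
  | 0, a => if a = 0 then 1 else 0
  | n + 1, a => ∑ b ∈ interlacing a, if a.degree = b.degree + ν n then kostka ν n b else 0

lemma mem_interlacing {a b : ℕ →₀ ℕ} :
    b ∈ interlacing a ↔ (∀ i, b i ≤ a i) ∧ ∀ i, a (i + 1) ≤ b i := by
  simp [interlacing, Finsupp.le_def]

lemma antitone_left_of_mem_interlacing {a b : ℕ →₀ ℕ} (h : b ∈ interlacing a) : Antitone a :=
  antitone_nat_of_succ_le fun i =>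
    ((mem_interlacing.1 h).2 i).trans ((mem_interlacing.1 h).1 i)

lemma antitone_right_of_mem_interlacing {a b : ℕ →₀ ℕ} (h : b ∈ interlacing a) : Antitone b :=
  antitone_nat_of_succ_le fun i =>
    ((mem_interlacing.1 h).1 (i + 1)).trans ((mem_interlacing.1 h).2 i)

lemma kostka_zero_ne_zero_iff {ν : ℕ → ℕ} {a : ℕ →₀ ℕ} : kostka ν 0 a ≠ 0 ↔ a = 0 := by
  simp [kostka]

lemma kostka_succ_ne_zero_iff {ν : ℕ → ℕ} {n : ℕ} {a : ℕ →₀ ℕ} :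
    kostka ν (n + 1) a ≠ 0 ↔
      ∃ b ∈ interlacing a, a.degree = b.degree + ν n ∧ kostka ν n b ≠ 0 := by
  simp [kostka]

lemma kostka_congr {ν ν' : ℕ → ℕ} {n : ℕ} (h : ∀ i < n, ν i = ν' i) (a : ℕ →₀ ℕ) :
    kostka ν n a = kostka ν' n a := by
  induction n generalizing a with
  | zero => rfl
  | succ n ih =>
    simp only [kostka, h n n.lt_succ_self, ih fun i hi => h i (hi.trans n.lt_succ_self)]

lemma antitone_of_kostka_ne_zero {ν : ℕ → ℕ} {n : ℕ} {a : ℕ →₀ ℕ} (h : kostka ν n a ≠ 0) :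
    Antitone a := by
  cases n with
  | zero =>
    rw [kostka_zero_ne_zero_iff.1 h]
    exact antitone_const
  | succ n =>
    obtain ⟨b, hb, -⟩ := kostka_succ_ne_zero_iff.1 h
    exact antitone_left_of_mem_interlacing hb

lemma apply_eq_zero_of_kostka_ne_zero {ν : ℕ → ℕ} {n : ℕ} {a : ℕ →₀ ℕ} (h : kostka ν n a ≠ 0)
    {i : ℕ} (hi : n ≤ i) : a i = 0 := by
  induction n generalizing a i with
  | zero => simp [kostka_zero_ne_zero_iff.1 h]
  | succ n ih =>
    obtain ⟨b, hb, -, hb'⟩ := kostka_succ_ne_zero_iff.1 h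
    obtain ⟨j, rfl⟩ := Nat.exists_eq_add_of_le' hi
    have := (mem_interlacing.1 hb).2 (j + n)
    rw [ih hb' (Nat.le_add_left n j)] at this
    exact Nat.le_zero.1 this

/-! ### Triangularity -/

/-- The statistic `∑ i, i * a i` on shapes, for which the Kostka matrix is triangular. -/
noncomputable def rank (a : ℕ →₀ ℕ) : ℕ := Finsupp.weight id a

lemma rank_add (a b : ℕ →₀ ℕ) : rank (a + b) = rank a + rank b := map_add _ _ _

lemma rank_single (i m : ℕ) : rank (Finsupp.single i m) = m * i := by
  simp [rank, Finsupp.weight_single]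

lemma rank_eq_sum (a : ℕ →₀ ℕ) : rank a = a.sum fun i m => m * i := by
  simp [rank, Finsupp.weight_apply]

lemma rank_le_mul_degree {d : ℕ →₀ ℕ} {n : ℕ} (h : ∀ i, n < i → d i = 0) :
    rank d ≤ n * d.degree ∧ (rank d = n * d.degree → ∀ i < n, d i = 0) := by
  have hle : ∀ i ∈ d.support, d i * i ≤ n * d i := fun i hi => by
    rw [mul_comm]
    exact Nat.mul_le_mul_right _ (not_lt.1 fun hin => Finsupp.mem_support_iff.1 hi (h i hin))
  rw [rank_eq_sum, Finsupp.sum, Finsupp.degree_apply, Finset.mul_sum]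
  refine ⟨Finset.sum_le_sum hle, fun heq i hi => ?_⟩
  by_contra hdi
  have := (Finset.sum_eq_sum_iff_of_le hle).1 heq i (Finsupp.mem_support_iff.2 hdi)
  rw [mul_comm n, Nat.mul_right_inj hdi] at this
  exact hi.ne this

lemma rank_le_of_kostka_ne_zero {ν : ℕ → ℕ} {n : ℕ} {a : ℕ →₀ ℕ} (h : kostka ν n a ≠ 0) :
    rank a ≤ ∑ i ∈ Finset.range n, ν i * i ∧
      (rank a = ∑ i ∈ Finset.range n, ν i * i → ∀ i < n, a i = ν i) := by
  induction n generalizing a with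
  | zero => simp [kostka_zero_ne_zero_iff.1 h, rank]
  | succ n ih =>
    obtain ⟨b, hb, hdeg, hb'⟩ := kostka_succ_ne_zero_iff.1 h
    obtain ⟨d, rfl⟩ : ∃ d, a = b + d :=
      ⟨a - b, (add_tsub_cancel_of_le (Finsupp.le_def.2 (mem_interlacing.1 hb).1)).symm⟩
    have hd : d.degree = ν n := by simpa using hdeg
    have hrows : ∀ i, n < i → d i = 0 := fun i hi => by
      have := apply_eq_zero_of_kostka_ne_zero h hi
      rw [Finsupp.add_apply] at this
      omega
    obtain ⟨hrank, hrank'⟩ := rank_le_mul_degree hrows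
    obtain ⟨hbr, hbr'⟩ := ih hb'
    rw [hd, mul_comm] at hrank hrank'
    rw [Finset.sum_range_succ, rank_add]
    refine ⟨by omega, fun heq i hi => ?_⟩
    have hlow := hrank' (by omega)
    rcases Nat.lt_succ_iff_lt_or_eq.1 hi with hi | rfl
    · rw [Finsupp.add_apply, hlow i hi, hbr' (by omega) i hi, add_zero]
    · have hsingle : d = Finsupp.single i (d i) := by
        ext j
        rcases lt_trichotomy j i with hj | rfl | hj
        · rw [hlow j hj, Finsupp.single_eq_of_ne hj.ne]
        · rw [Finsupp.single_eq_same]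
        · rw [hrows j hj, Finsupp.single_eq_of_ne hj.ne']
      rw [hsingle, Finsupp.degree_single] at hd
      rw [Finsupp.add_apply, hd, apply_eq_zero_of_kostka_ne_zero hb' le_rfl, zero_add]

lemma kostka_self_ne_zero {a : ℕ →₀ ℕ} (ha : Antitone a) {n : ℕ} (hn : ∀ i, n ≤ i → a i = 0) :
    kostka a n a ≠ 0 := by
  induction n generalizing a with
  | zero => exact kostka_zero_ne_zero_iff.2 (Finsupp.ext fun i => hn i i.zero_le)
  | succ n ih =>
    have herase : ∀ i, a.erase n i = if i < n then a i else 0 := fun i => by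
      rw [Finsupp.erase_apply]
      split_ifs <;> first | rfl | omega | exact hn i (by omega)
    refine kostka_succ_ne_zero_iff.2
      ⟨a.erase n, mem_interlacing.2 ⟨fun i => ?_, fun i => ?_⟩, ?_, ?_⟩
    · rw [herase]
      split_ifs <;> simp
    · rw [herase]
      split_ifs with hi
      · exact ha i.le_succ
      · exact (hn (i + 1) (by omega)).le
    · conv_lhs => rw [← Finsupp.erase_add_single n a]
      rw [map_add, Finsupp.degree_single]
    · rw [← kostka_congr (ν := a.erase n) fun i hi => by rw [herase, if_pos hi]]
      refine ih (antitone_nat_of_succ_le fun i => ?_) fun i hi => ?_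
      · rw [herase, herase]
        have := ha i.le_succ
        split_ifs <;> omega
      · rw [herase, if_neg hi.not_gt]

/-! ### Symmetry of the Kostka numbers -/

/-- The least length of row `i` of a shape lying between `c` and `a` in a two-step removal of
horizontal strips. -/
def lowerRow (a c : ℕ →₀ ℕ) (i : ℕ) : ℕ := max (a (i + 1)) (c i)

/-- The greatest length of row `i` of a shape lying between `c` and `a` in a two-step removal of
horizontal strips. -/
def upperRow (a c : ℕ →₀ ℕ) : ℕ → ℕ
  | 0 => a 0
  | i + 1 => min (a (i + 1)) (c i)

/-- The Bender–Knuth reflection, which reverses the interval of possible lengths of each row of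
an intermediate shape `b` between `c` and `a`. -/
noncomputable def reflect (a c b : ℕ →₀ ℕ) : ℕ →₀ ℕ :=
  Finsupp.onFinset a.support (fun i => upperRow a c i - (b i - lowerRow a c i)) fun i hi => by
    rw [Finsupp.mem_support_iff]
    cases i <;> simp only [upperRow] at hi <;> omega

lemma reflect_apply (a c b : ℕ →₀ ℕ) (i : ℕ) :
    reflect a c b i = upperRow a c i - (b i - lowerRow a c i) := rfl

lemma mem_interlacing_and_mem_interlacing_iff {a b c : ℕ →₀ ℕ} :
    b ∈ interlacing a ∧ c ∈ interlacing b ↔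
      ∀ i, lowerRow a c i ≤ b i ∧ b i ≤ upperRow a c i := by
  simp only [mem_interlacing, lowerRow, max_le_iff]
  constructor
  · rintro ⟨⟨hba, hab⟩, hcb, hbc⟩ i
    refine ⟨⟨hab i, hcb i⟩, ?_⟩
    cases i with
    | zero => exact hba 0
    | succ i => exact le_min (hba _) (hbc i)
  · intro h
    refine ⟨⟨fun i => (h i).2.trans ?_, fun i => (h i).1.1⟩, fun i => (h i).1.2,
      fun i => (h (i + 1)).2.trans (min_le_right _ _)⟩
    cases i with
    | zero => exact le_rfl
    | succ i => exact min_le_left _ _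

lemma sum_lowerRow_add_upperRow (a c : ℕ →₀ ℕ) (n : ℕ) :
    ∑ i ∈ Finset.range (n + 1), (lowerRow a c i + upperRow a c i) + min (a (n + 1)) (c n) =
      ∑ i ∈ Finset.range (n + 1 + 1), a i + ∑ i ∈ Finset.range (n + 1), c i := by
  induction n with
  | zero =>
    simp only [Finset.sum_range_succ, Finset.sum_range_zero, lowerRow, upperRow, zero_add]
    omega
  | succ n ih =>
    rw [Finset.sum_range_succ, Finset.sum_range_succ a (n + 1 + 1), Finset.sum_range_succ c]
    simp only [lowerRow, upperRow] at ih ⊢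
    omega

lemma degree_eq_sum_range {a : ℕ →₀ ℕ} {n : ℕ} (h : ∀ i, n ≤ i → a i = 0) :
    a.degree = ∑ i ∈ Finset.range n, a i := by
  rw [Finsupp.degree_apply]
  refine Finset.sum_subset (fun i hi => ?_) fun i _ => Finsupp.notMem_support_iff.1
  by_contra hin
  exact Finsupp.mem_support_iff.1 hi (h i (by simpa using hin))

lemma exists_forall_ge_apply_eq_zero (a : ℕ →₀ ℕ) : ∃ n, ∀ i, n ≤ i → a i = 0 := by
  obtain ⟨n, hn⟩ := a.support.exists_nat_subset_range
  exact ⟨n, fun i hi => Finsupp.notMem_support_iff.1 fun h => by simpa [hi.not_gt] using hn h⟩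

lemma degree_add_degree_reflect {a b c : ℕ →₀ ℕ} (h : b ∈ interlacing a ∧ c ∈ interlacing b) :
    b.degree + (reflect a c b).degree = a.degree + c.degree := by
  obtain ⟨n, hn⟩ := exists_forall_ge_apply_eq_zero a
  have hb : ∀ i, n ≤ i → b i = 0 := fun i hi =>
    Nat.le_zero.1 ((hn i hi).symm ▸ (mem_interlacing.1 h.1).1 i)
  have hc : ∀ i, n ≤ i → c i = 0 := fun i hi =>
    Nat.le_zero.1 ((hb i hi).symm ▸ (mem_interlacing.1 h.2).1 i)
  have hr : ∀ i, n ≤ i → reflect a c b i = 0 := fun i hi => by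
    cases i <;> simp [reflect_apply, upperRow, hn _ hi]
  rw [degree_eq_sum_range (n := n + 1 + 1) fun i hi => hn i (by omega),
    degree_eq_sum_range (n := n + 1) fun i hi => hb i (by omega),
    degree_eq_sum_range (n := n + 1) fun i hi => hc i (by omega),
    degree_eq_sum_range (n := n + 1) fun i hi => hr i (by omega),
    ← sum_lowerRow_add_upperRow, hc n le_rfl, Nat.min_zero, add_zero, ← Finset.sum_add_distrib]
  refine Finset.sum_congr rfl fun i _ => ?_
  have := mem_interlacing_and_mem_interlacing_iff.1 h i
  rw [reflect_apply]
  omega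

lemma reflect_mem {a b c : ℕ →₀ ℕ} (h : b ∈ interlacing a ∧ c ∈ interlacing b) :
    reflect a c b ∈ interlacing a ∧ c ∈ interlacing (reflect a c b) := by
  rw [mem_interlacing_and_mem_interlacing_iff] at h ⊢
  intro i
  have := h i
  rw [reflect_apply]
  omega

lemma reflect_reflect {a b c : ℕ →₀ ℕ} (h : b ∈ interlacing a ∧ c ∈ interlacing b) :
    reflect a c (reflect a c b) = b := by
  rw [mem_interlacing_and_mem_interlacing_iff] at h
  ext i
  have := h i
  simp only [reflect_apply]
  omega

lemma kostka_add_two (ν : ℕ → ℕ) (n : ℕ) (a : ℕ →₀ ℕ) :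
    kostka ν (n + 2) a = ∑ p ∈ (interlacing a).sigma interlacing,
      if a.degree = p.1.degree + ν (n + 1) ∧ p.1.degree = p.2.degree + ν n
      then kostka ν n p.2 else 0 := by
  simp only [Finset.sum_sigma, kostka, ite_and]
  refine Finset.sum_congr rfl fun b _ => ?_
  split_ifs
  · rfl
  · rw [Finset.sum_const_zero]

lemma kostka_add_two_comp_swap (ν : ℕ → ℕ) (n : ℕ) (a : ℕ →₀ ℕ) :
    kostka (ν ∘ Equiv.swap n (n + 1)) (n + 2) a = kostka ν (n + 2) a := by
  have hlow : ∀ i < n, (ν ∘ Equiv.swap n (n + 1)) i = ν i := fun i hi => by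
    rw [Function.comp_apply, Equiv.swap_apply_of_ne_of_ne (by omega) (by omega)]
  simp only [kostka_add_two, kostka_congr hlow, Function.comp_apply, Equiv.swap_apply_left,
    Equiv.swap_apply_right]
  have hmem : ∀ p ∈ (interlacing a).sigma interlacing,
      (⟨reflect a p.2 p.1, p.2⟩ : (_ : ℕ →₀ ℕ) × (ℕ →₀ ℕ)) ∈ (interlacing a).sigma interlacing :=
    fun p hp => Finset.mem_sigma.2 (reflect_mem (Finset.mem_sigma.1 hp))
  have hinv : ∀ p ∈ (interlacing a).sigma interlacing,
      (⟨reflect a p.2 (reflect a p.2 p.1), p.2⟩ : (_ : ℕ →₀ ℕ) × (ℕ →₀ ℕ)) = p :=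
    fun p hp => by rw [reflect_reflect (Finset.mem_sigma.1 hp)]
  refine Finset.sum_nbij' (fun p => ⟨reflect a p.2 p.1, p.2⟩) (fun p => ⟨reflect a p.2 p.1, p.2⟩)
    hmem hmem hinv hinv fun p hp => ?_
  have := degree_add_degree_reflect (Finset.mem_sigma.1 hp)
  congr 1
  simp only [eq_iff_iff]
  omega

lemma kostka_comp_swap (ν : ℕ → ℕ) {i n : ℕ} (hi : i + 2 ≤ n) (a : ℕ →₀ ℕ) :
    kostka (ν ∘ Equiv.swap i (i + 1)) n a = kostka ν n a := by
  induction n, hi using Nat.le_induction generalizing a with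
  | base => exact kostka_add_two_comp_swap ν i a
  | succ n hn ih =>
    simp only [kostka, ih, Function.comp_apply,
      Equiv.swap_apply_of_ne_of_ne (a := i) (b := i + 1) (x := n) (by omega) (by omega)]

/-! ### The Pieri rule -/

lemma mem_interlacing_add_single {a b : ℕ →₀ ℕ} {i : ℕ} :
    b ∈ interlacing (a + Finsupp.single i 1) ↔
      (∀ j, b j ≤ a j + if i = j then 1 else 0) ∧
        ∀ j, a (j + 1) + (if i = j + 1 then 1 else 0) ≤ b j := by
  simp only [mem_interlacing, Finsupp.add_apply, Finsupp.single_apply]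

lemma mem_map_addRight_interlacing {a b : ℕ →₀ ℕ} {i : ℕ} :
    b ∈ (interlacing a).map (addRightEmbedding (Finsupp.single i 1)) ↔
      (∀ j, b j ≤ a j + if i = j then 1 else 0) ∧
        ∀ j, a (j + 1) + (if i = j then 1 else 0) ≤ b j := by
  simp only [Finset.mem_map, mem_interlacing, addRightEmbedding_apply]
  constructor
  · rintro ⟨c, ⟨hca, hac⟩, rfl⟩
    simp only [Finsupp.add_apply, Finsupp.single_apply]
    exact ⟨fun j => Nat.add_le_add_right (hca j) _, fun j => Nat.add_le_add_right (hac j) _⟩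
  · rintro ⟨hba, hab⟩
    have hsub : ∀ j, (b - Finsupp.single i 1 : ℕ →₀ ℕ) j = b j - if i = j then 1 else 0 :=
      fun j => by
      rw [Finsupp.tsub_apply, Finsupp.single_apply]
    refine ⟨b - Finsupp.single i 1, ⟨fun j => ?_, fun j => ?_⟩, tsub_add_cancel_of_le ?_⟩
    · rw [hsub]
      exact Nat.sub_le_iff_le_add.2 (hba j)
    · rw [hsub]
      exact Nat.le_sub_of_add_le (hab j)
    · rw [Finsupp.single_le_iff]
      have := hab i
      rw [if_pos rfl] at this
      omega

lemma sum_interlacing_add_single (a : ℕ →₀ ℕ) (g : (ℕ →₀ ℕ) → ℕ) (i : ℕ) :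
    ∑ b ∈ interlacing (a + Finsupp.single i 1), g b =
      ∑ b ∈ interlacing a with ∀ j, j + 1 = i → a i < b j, g b +
        ∑ b ∈ interlacing (a + Finsupp.single i 1) with a i < b i, g b := by
  rw [← Finset.sum_filter_not_add_sum_filter _ fun b => a i < b i]
  congr 2
  ext b
  rw [Finset.mem_filter, Finset.mem_filter, mem_interlacing_add_single, mem_interlacing]
  constructor
  · rintro ⟨⟨hba, hab⟩, hi⟩
    refine ⟨⟨fun j => ?_, fun j => (Nat.le_add_right _ _).trans (hab j)⟩, ?_⟩
    · have := hba j
      split_ifs at this with h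
      · exact h ▸ not_lt.1 hi
      · exact this
    · rintro j rfl
      simpa using hab j
  · rintro ⟨⟨hba, hab⟩, hi⟩
    refine ⟨⟨fun j => (hba j).trans (Nat.le_add_right _ _), fun j => ?_⟩, not_lt.2 (hba i)⟩
    split_ifs with h
    · exact h ▸ hi j h.symm
    · exact hab j

lemma sum_interlacing_comp_add_single {a : ℕ →₀ ℕ} (ha : Antitone a) {g : (ℕ →₀ ℕ) → ℕ}
    (hg : ∀ b, g b ≠ 0 → Antitone b) (i : ℕ) :
    ∑ b ∈ interlacing a, g (b + Finsupp.single i 1) =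
      ∑ b ∈ interlacing a with a (i + 1) < b i, g b +
        ∑ b ∈ interlacing (a + Finsupp.single i 1) with a i < b i, g b := by
  calc _ = ∑ b ∈ (interlacing a).map (addRightEmbedding (Finsupp.single i 1)), g b := by
        rw [Finset.sum_map]
        rfl
    _ = _ := ?_
  rw [← Finset.sum_filter_not_add_sum_filter _ fun b => a i < b i]
  congr 1
  · refine Finset.sum_congr (Finset.ext fun b => ?_) fun _ _ => rfl
    simp only [Finset.mem_filter, mem_map_addRight_interlacing, mem_interlacing]
    grind
  · refine (Finset.sum_subset (fun b => ?_) fun b hb hb' => not_not.1 fun hgb => hb' ?_).symm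
    · simp only [Finset.mem_filter, mem_map_addRight_interlacing, mem_interlacing_add_single]
      have := ha i.le_succ
      grind
    · simp only [Finset.mem_filter, mem_map_addRight_interlacing,
        mem_interlacing_add_single] at hb ⊢
      have := fun j => hg b hgb (Nat.le_succ j)
      grind

/-- Both sides count the pairs of a box added to and a horizontal strip removed from `a`: adding
the box first gives one outcome more for each strip, adding it in the top row. -/
lemma sum_sum_interlacing_add_single {a : ℕ →₀ ℕ} (ha : Antitone a) {g : (ℕ →₀ ℕ) → ℕ} {n : ℕ}
    (hg : ∀ b, g b ≠ 0 → Antitone b) (hn : ∀ b, g b ≠ 0 → b n = 0) :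
    ∑ i ∈ Finset.range (n + 1), ∑ b ∈ interlacing (a + Finsupp.single i 1), g b =
      ∑ i ∈ Finset.range n, ∑ b ∈ interlacing a, g (b + Finsupp.single i 1) +
        ∑ b ∈ interlacing a, g b := by
  have htop : ∑ b ∈ interlacing (a + Finsupp.single n 1) with a n < b n, g b = 0 :=
    Finset.sum_eq_zero fun b hb => not_not.1 fun hgb => by
      have := (Finset.mem_filter.1 hb).2
      rw [hn b hgb] at this
      omega
  simp only [sum_interlacing_add_single, sum_interlacing_comp_add_single ha hg,
    Finset.sum_add_distrib]
  rw [Finset.sum_range_succ', Finset.sum_range_succ _ n, htop, add_zero]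
  simp only [Nat.add_right_cancel_iff, forall_eq, Nat.add_one_ne_zero, false_imp_iff,
    implies_true, Finset.filter_true]
  ring

theorem sum_kostka_add_single {a : ℕ →₀ ℕ} (ha : Antitone a) (ν : ℕ → ℕ) (n : ℕ) :
    ∑ i ∈ Finset.range n, kostka ν n (a + Finsupp.single i 1) =
      ∑ i ∈ Finset.range n, if 0 < ν i then kostka (ν - Pi.single i 1) n a else 0 := by
  induction n generalizing a with
  | zero => rfl
  | succ n ih =>
    have hlast : ∑ b ∈ interlacing a, (if a.degree + 1 = b.degree + ν n then kostka ν n b else 0) =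
        if 0 < ν n then kostka (ν - Pi.single n 1) (n + 1) a else 0 := by
      have hlow : ∀ i < n, (ν - Pi.single n 1 : ℕ → ℕ) i = ν i := fun i hi => by simp [hi.ne]
      simp only [kostka, kostka_congr hlow, Pi.sub_apply, Pi.single_eq_same]
      rw [Finset.ite_sum_zero]
      refine Finset.sum_congr rfl fun b hb => ?_
      have := Finsupp.degree_mono (Finsupp.le_def.2 (mem_interlacing.1 hb).1)
      split_ifs <;> first | rfl | omega
    have hinit : ∀ i ∈ Finset.range n,
        (if 0 < ν i then kostka (ν - Pi.single i 1) (n + 1) a else 0) =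
        ∑ b ∈ interlacing a, if a.degree = b.degree + ν n then
          (if 0 < ν i then kostka (ν - Pi.single i 1) n b else 0) else 0 := fun i hi => by
      simp only [kostka, Pi.sub_apply, Pi.single_eq_of_ne (Finset.mem_range.1 hi).ne', tsub_zero]
      split_ifs <;> simp
    conv_rhs => rw [Finset.sum_range_succ, ← hlast, Finset.sum_congr rfl hinit]
    simp only [kostka, map_add, Finsupp.degree_single]
    rw [sum_sum_interlacing_add_single ha]
    · congr 1
      rw [Finset.sum_comm, Finset.sum_comm (s := Finset.range n)]
      refine Finset.sum_congr rfl fun b hb => ?_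
      simp only [map_add, Finsupp.degree_single, add_right_comm _ 1, Nat.add_right_cancel_iff]
      rw [← Finset.ite_sum_zero, ih (antitone_right_of_mem_interlacing hb), Finset.ite_sum_zero]
    · exact fun b hb => antitone_of_kostka_ne_zero (ite_ne_right_iff.1 hb).2
    · exact fun b hb => apply_eq_zero_of_kostka_ne_zero (ite_ne_right_iff.1 hb).2 le_rfl

/-! ### Counting semistandard tableaux -/

/-- The Young diagram with row lengths `a`. -/
noncomputable def cells (a : ℕ →₀ ℕ) : Finset Cell :=
  (a.support.sigma fun i => Finset.range (a i)).map (Equiv.sigmaEquivProd ℕ ℕ).toEmbedding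

lemma mem_cells {a : ℕ →₀ ℕ} {c : Cell} : c ∈ cells a ↔ c.2 < a c.1 := by
  simp only [cells, Finset.mem_map_equiv, Finset.mem_sigma, Finsupp.mem_support_iff,
    Finset.mem_range, Equiv.sigmaEquivProd_symm_apply]
  omega

lemma card_cells (a : ℕ →₀ ℕ) : (cells a).card = a.degree := by
  simp [cells, Finsupp.degree_apply]

/-- `IsSSYT` for a shape given by its row lengths. -/
structure IsTableau (a : ℕ →₀ ℕ) (t : Cell → ℕ) : Prop where
  eq_zero : ∀ c ∉ cells a, t c = 0
  pos : ∀ c ∈ cells a, 0 < t c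
  row_le : ∀ i j, (i, j + 1) ∈ cells a → t (i, j) ≤ t (i, j + 1)
  col_lt : ∀ i j, (i + 1, j) ∈ cells a → t (i, j) < t (i + 1, j)

/-- The set of tableaux of shape `a` with `ν i` entries equal to `i + 1` for `i < n` and no entry
exceeding `n`. -/
def tableaux (ν : ℕ → ℕ) (n : ℕ) (a : ℕ →₀ ℕ) : Set (Cell → ℕ) :=
  {t | IsTableau a t ∧ (∀ c, t c ≤ n) ∧ ∀ i < n, ((cells a).filter fun c => t c = i + 1).card = ν i}

/-- The shape formed by the entries of a tableau `t` of shape `a` that are at most `n`. -/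
noncomputable def subshape (n : ℕ) (a : ℕ →₀ ℕ) (t : Cell → ℕ) : ℕ →₀ ℕ :=
  Finsupp.onFinset a.support (fun i => ((Finset.range (a i)).filter fun j => t (i, j) ≤ n).card)
    fun i hi => by
      rw [Finsupp.mem_support_iff]
      rintro h
      simp [h] at hi

lemma eq_range_card_of_forall_le_mem {s : Finset ℕ} (h : ∀ j ∈ s, ∀ k ≤ j, k ∈ s) :
    s = Finset.range s.card :=
  Finset.eq_of_subset_of_card_le
    (fun j hj => by
      have : Finset.range (j + 1) ⊆ s := fun k hk =>
        h j hj k (Nat.le_of_lt_succ (Finset.mem_range.1 hk))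
      simpa using Finset.card_le_card this)
    (Finset.card_range _).le

lemma IsTableau.le_of_le {a : ℕ →₀ ℕ} {t : Cell → ℕ} (ht : IsTableau a t) {i j k : ℕ}
    (hjk : j ≤ k) (hk : (i, k) ∈ cells a) : t (i, j) ≤ t (i, k) := by
  induction k, hjk using Nat.le_induction with
  | base => exact le_rfl
  | succ k _ ih =>
    exact (ih (mem_cells.2 (k.lt_succ_self.trans (mem_cells.1 hk)))).trans (ht.row_le i k hk)

lemma mem_cells_subshape {a : ℕ →₀ ℕ} {t : Cell → ℕ} (ht : IsTableau a t) {n : ℕ} {c : Cell} :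
    c ∈ cells (subshape n a t) ↔ c ∈ cells a ∧ t c ≤ n := by
  obtain ⟨i, j⟩ := c
  have hlower := eq_range_card_of_forall_le_mem
    (s := (Finset.range (a i)).filter fun j => t (i, j) ≤ n) fun j hj k hkj => by
      rw [Finset.mem_filter, Finset.mem_range] at hj ⊢
      exact ⟨hkj.trans_lt hj.1, (ht.le_of_le hkj (mem_cells.2 hj.1)).trans hj.2⟩
  rw [mem_cells, mem_cells, subshape, Finsupp.onFinset_apply, ← Finset.mem_range, ← hlower,
    Finset.mem_filter, Finset.mem_range]

lemma cells_injective : Function.Injective cells := fun a b h => by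
  ext i
  refine eq_of_forall_lt_iff fun j => ?_
  simpa only [mem_cells] using Finset.ext_iff.1 h (i, j)

lemma subshape_mem_interlacing {a : ℕ →₀ ℕ} (ha : Antitone a) {t : Cell → ℕ}
    (ht : IsTableau a t) {n : ℕ} (hn : ∀ c, t c ≤ n + 1) :
    subshape n a t ∈ interlacing a := by
  refine mem_interlacing.2 ⟨fun i => le_of_forall_lt fun j hj => ?_,
    fun i => le_of_forall_lt fun j hj => ?_⟩
  · exact mem_cells.1 ((mem_cells_subshape ht (c := (i, j))).1 (mem_cells.2 hj)).1
  · refine mem_cells.1 ((mem_cells_subshape ht (c := (i, j))).2 ⟨?_, ?_⟩)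
    · exact mem_cells.2 (hj.trans_le (ha i.le_succ))
    · exact Nat.le_of_lt_succ ((ht.col_lt i j (mem_cells.2 hj)).trans_le (hn _))

lemma degree_eq_degree_subshape_add {a : ℕ →₀ ℕ} {t : Cell → ℕ} (ht : IsTableau a t) {n : ℕ}
    (hn : ∀ c, t c ≤ n + 1) :
    a.degree = (subshape n a t).degree + ((cells a).filter fun c => t c = n + 1).card := by
  have hsub : cells (subshape n a t) = (cells a).filter fun c => t c ≤ n := by
    ext c
    rw [mem_cells_subshape ht, Finset.mem_filter]
  rw [← card_cells, ← card_cells, hsub, ← Finset.card_filter_add_card_filter_not fun c => t c ≤ n]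
  congr 2
  refine Finset.filter_congr fun c _ => ?_
  have := hn c
  omega

/-- The tableau formed by the entries of `t` that are at most `n`. -/
def truncate (n : ℕ) (t : Cell → ℕ) : Cell → ℕ := fun c => if t c ≤ n then t c else 0

/-- The extension of a tableau `t` of shape `b` to the shape `a` by entries `n + 1`. -/
noncomputable def extend (n : ℕ) (a b : ℕ →₀ ℕ) (t : Cell → ℕ) : Cell → ℕ := fun c =>
  if c ∈ cells b then t c else if c ∈ cells a then n + 1 else 0

lemma truncate_mem_tableaux {ν : ℕ → ℕ} {n : ℕ} {a : ℕ →₀ ℕ} {t : Cell → ℕ}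
    (ht : t ∈ tableaux ν (n + 1) a) : truncate n t ∈ tableaux ν n (subshape n a t) := by
  obtain ⟨ht, -, hν⟩ := ht
  have hmem := fun c => mem_cells_subshape ht (n := n) (c := c)
  refine ⟨⟨fun c hc => ?_, fun c hc => ?_, fun i j hc => ?_, fun i j hc => ?_⟩, fun c => ?_,
    fun i hi => ?_⟩
  · have := ht.eq_zero c
    grind [truncate]
  · have := ht.pos c
    grind [truncate]
  · have := ht.row_le i j
    grind [truncate]
  · have := ht.col_lt i j
    grind [truncate]
  · grind [truncate]
  · rw [← hν i (by omega)]
    congr 1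
    ext c
    simp only [Finset.mem_filter, truncate]
    grind

lemma extend_mem_tableaux {ν : ℕ → ℕ} {n : ℕ} {a b : ℕ →₀ ℕ} (hb : b ∈ interlacing a)
    (hdeg : a.degree = b.degree + ν n) {t : Cell → ℕ} (ht : t ∈ tableaux ν n b) :
    extend n a b t ∈ tableaux ν (n + 1) a ∧ subshape n a (extend n a b t) = b := by
  obtain ⟨ht, hn, hν⟩ := ht
  obtain ⟨hba, hab⟩ := mem_interlacing.1 hb
  have hsub : ∀ c ∈ cells b, c ∈ cells a := fun c hc =>
    mem_cells.2 ((mem_cells.1 hc).trans_le (hba c.1))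
  have hext : IsTableau a (extend n a b t) := by
    refine ⟨fun c hc => ?_, fun c hc => ?_, fun i j hc => ?_, fun i j hc => ?_⟩
    · grind [extend]
    · have := ht.pos c
      grind [extend]
    · have := ht.row_le i j
      have := hn (i, j)
      have hleft : (i, j + 1) ∈ cells b → (i, j) ∈ cells b := by grind [mem_cells]
      have : (i, j) ∈ cells a := by grind [mem_cells]
      grind [extend]
    · have := ht.col_lt i j
      have := hn (i, j)
      have : (i, j) ∈ cells b := mem_cells.2 ((mem_cells.1 hc).trans_le (hab i))
      grind [extend]
  have hle : ∀ c, extend n a b t c ≤ n + 1 := fun c => by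
    have := hn c
    grind [extend]
  have hshape : subshape n a (extend n a b t) = b := cells_injective <| by
    ext c
    rw [mem_cells_subshape hext]
    grind [extend]
  refine ⟨⟨hext, hle, fun i hi => ?_⟩, hshape⟩
  rcases Nat.lt_succ_iff_lt_or_eq.1 hi with hi | rfl
  · rw [← hν i hi]
    congr 1
    ext c
    simp only [Finset.mem_filter]
    grind [extend]
  · have := degree_eq_degree_subshape_add hext hle
    rw [hshape] at this
    omega

lemma extend_truncate {n : ℕ} {a : ℕ →₀ ℕ} {t : Cell → ℕ} (ht : IsTableau a t)
    (hn : ∀ c, t c ≤ n + 1) : extend n a (subshape n a t) (truncate n t) = t := by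
  funext c
  have := hn c
  have := ht.eq_zero c
  have := mem_cells_subshape ht (n := n) (c := c)
  grind [extend, truncate]

lemma truncate_extend {n : ℕ} {a b : ℕ →₀ ℕ} {t : Cell → ℕ} (ht : IsTableau b t)
    (hn : ∀ c, t c ≤ n) : truncate n (extend n a b t) = t := by
  funext c
  have := hn c
  have := ht.eq_zero c
  grind [extend, truncate]

lemma finite_tableaux (ν : ℕ → ℕ) (n : ℕ) (a : ℕ →₀ ℕ) : (tableaux ν n a).Finite := by
  refine Set.Finite.of_injOn (f := fun t (c : cells a) => Fin.ofNat (n + 1) (t c))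
    (Set.mapsTo_univ _ _) (fun t ht t' ht' h => ?_) Set.finite_univ
  funext c
  by_cases hc : c ∈ cells a
  · have := congrArg Fin.val (congrFun h ⟨c, hc⟩)
    simpa [Nat.mod_eq_of_lt (Nat.lt_succ_of_le (ht.2.1 c)),
      Nat.mod_eq_of_lt (Nat.lt_succ_of_le (ht'.2.1 c))] using this
  · rw [ht.1.eq_zero c hc, ht'.1.eq_zero c hc]

lemma ncard_tableaux_subshape_eq {ν : ℕ → ℕ} {n : ℕ} {a b : ℕ →₀ ℕ}
    (hb : b ∈ interlacing a) :
    {t ∈ tableaux ν (n + 1) a | subshape n a t = b}.ncard =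
      if a.degree = b.degree + ν n then (tableaux ν n b).ncard else 0 := by
  split_ifs with hdeg
  · refine Set.BijOn.ncard_eq (f := truncate n)
      (Set.InvOn.bijOn (f' := extend n a b) ⟨?_, ?_⟩ ?_ ?_)
    · rintro t ⟨ht, rfl⟩
      exact extend_truncate ht.1 ht.2.1
    · exact fun t ht => truncate_extend ht.1 ht.2.1
    · rintro t ⟨ht, rfl⟩
      exact truncate_mem_tableaux ht
    · exact fun t ht => extend_mem_tableaux hb hdeg ht
  · rw [Set.ncard_eq_zero ((finite_tableaux ν _ a).subset (Set.sep_subset _ _))]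
    refine Set.eq_empty_of_forall_notMem ?_
    rintro t ⟨ht, rfl⟩
    rw [degree_eq_degree_subshape_add ht.1 ht.2.1, ht.2.2 n n.lt_succ_self] at hdeg
    exact hdeg rfl

lemma mem_tableaux_zero_iff {ν : ℕ → ℕ} {a : ℕ →₀ ℕ} {t : Cell → ℕ} :
    t ∈ tableaux ν 0 a ↔ a = 0 ∧ t = 0 := by
  constructor
  · rintro ⟨ht, hle, -⟩
    have hempty : ∀ c, c ∉ cells a := fun c hc => ((ht.pos c hc).trans_le (hle c)).false
    refine ⟨cells_injective <| Finset.ext fun c => ?_, funext fun c => Nat.le_zero.1 (hle c)⟩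
    simp [hempty c, mem_cells]
  · rintro ⟨rfl, rfl⟩
    have hempty : ∀ c, c ∉ cells 0 := fun c => by simp [mem_cells]
    exact ⟨⟨fun _ _ => rfl, fun c hc => (hempty c hc).elim, fun _ _ _ => le_rfl,
      fun i j hc => (hempty _ hc).elim⟩, fun _ => le_rfl, fun i hi => (Nat.not_lt_zero i hi).elim⟩

theorem ncard_tableaux (ν : ℕ → ℕ) (n : ℕ) {a : ℕ →₀ ℕ} (ha : Antitone a) :
    (tableaux ν n a).ncard = kostka ν n a := by
  induction n generalizing a with
  | zero =>
    rw [kostka]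
    split_ifs with h
    · exact Set.ncard_eq_one.2 ⟨0, Set.ext fun t => by simp [mem_tableaux_zero_iff, h]⟩
    · rw [Set.eq_empty_of_forall_notMem fun t ht => h (mem_tableaux_zero_iff.1 ht).1,
        Set.ncard_empty]
  | succ n ih =>
    have hfin := finite_tableaux ν (n + 1) a
    have hshape : Set.MapsTo (subshape n a) hfin.toFinset (interlacing a) := fun t ht =>
      have ht := hfin.mem_toFinset.1 ht
      subshape_mem_interlacing ha ht.1 ht.2.1
    rw [kostka, Set.ncard_eq_toFinset_card _ hfin, Finset.card_eq_sum_card_fiberwise hshape]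
    refine Finset.sum_congr rfl fun b hb => ?_
    rw [← ih (antitone_right_of_mem_interlacing hb), ← ncard_tableaux_subshape_eq hb,
      ← Set.ncard_coe_finset]
    congr 1
    ext t
    simp

/-! ### Partitions as shapes -/

lemma rowLen_eq_getD {N : ℕ} {lam : Nat.Partition N} {L : List ℕ} (hL : L.Pairwise (· ≥ ·))
    (h : lam.parts = L) (i : ℕ) : rowLen lam i = L.getD i 0 := by
  suffices (lam.parts.sort (· ≤ ·)).reverse = L by rw [rowLen, this]
  refine List.Perm.eq_of_pairwise (le := (· ≥ ·)) (fun _ _ _ _ h₁ h₂ => le_antisymm h₂ h₁)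
    (List.pairwise_reverse.2 (Multiset.pairwise_sort _ _)) hL ?_
  rw [← Multiset.coe_eq_coe, ← h, Multiset.coe_reverse, Multiset.sort_eq]

lemma exists_list_of_partition {N : ℕ} (lam : Nat.Partition N) :
    ∃ L : List ℕ, L.Pairwise (· ≥ ·) ∧ lam.parts = L :=
  ⟨(lam.parts.sort (· ≤ ·)).reverse, List.pairwise_reverse.2 (Multiset.pairwise_sort _ _),
    by rw [Multiset.coe_reverse, Multiset.sort_eq]⟩

/-- The row lengths `rowLen lam` as a finitely supported function. -/
noncomputable def rows {N : ℕ} (lam : Nat.Partition N) : ℕ →₀ ℕ :=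
  Finsupp.onFinset (Finset.range (numRows lam)) (rowLen lam) fun i hi => by
    obtain ⟨L, hL, h⟩ := exists_list_of_partition lam
    rw [rowLen_eq_getD hL h] at hi
    rw [numRows, h, Multiset.coe_card, Finset.mem_range]
    exact not_le.1 fun hle => hi (List.getD_eq_default _ _ hle)

lemma rows_apply {N : ℕ} (lam : Nat.Partition N) (i : ℕ) : rows lam i = rowLen lam i := rfl

lemma rows_antitone {N : ℕ} (lam : Nat.Partition N) : Antitone (rows lam) := by
  obtain ⟨L, hL, h⟩ := exists_list_of_partition lam
  refine antitone_nat_of_succ_le fun i => ?_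
  rw [rows_apply, rows_apply, rowLen_eq_getD hL h, rowLen_eq_getD hL h]
  rcases lt_or_ge (i + 1) L.length with hi | hi
  · rw [List.getD_eq_getElem _ _ hi, List.getD_eq_getElem _ _ (i.lt_succ_self.trans hi)]
    exact List.pairwise_iff_getElem.1 hL i (i + 1) _ hi i.lt_succ_self
  · rw [List.getD_eq_default _ _ hi]
    exact Nat.zero_le _

lemma parts_eq_map_rows {N : ℕ} (lam : Nat.Partition N) :
    lam.parts = (rows lam).support.val.map (rows lam) := by
  obtain ⟨L, hL, h⟩ := exists_list_of_partition lam
  have hrows : ∀ i, rows lam i = L.getD i 0 := rowLen_eq_getD hL h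
  have hsupp : (rows lam).support = Finset.range L.length := by
    ext i
    rw [Finsupp.mem_support_iff, hrows, Finset.mem_range]
    refine ⟨fun hi => not_le.1 fun hle => hi (List.getD_eq_default _ _ hle), fun hi => ?_⟩
    rw [List.getD_eq_getElem _ _ hi]
    exact (lam.parts_pos (by rw [h]; exact List.getElem_mem hi)).ne'
  rw [hsupp, Finset.range_val, Multiset.range, Multiset.map_coe, h, funext hrows]
  exact congrArg _ (List.ext_getElem (by simp) fun i hi _ => by simp [hi])

lemma rows_injective {N : ℕ} : Function.Injective (rows (N := N)) := fun lam lam' h =>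
  Nat.Partition.ext (by rw [parts_eq_map_rows, parts_eq_map_rows, h])

lemma degree_rows {N : ℕ} (lam : Nat.Partition N) : (rows lam).degree = N := by
  conv_rhs => rw [← lam.parts_sum, parts_eq_map_rows]
  rfl

lemma exists_rows_eq {N : ℕ} {a : ℕ →₀ ℕ} (ha : Antitone a) (hN : a.degree = N) :
    ∃ lam : Nat.Partition N, rows lam = a := by
  let lam : Nat.Partition N :=
    { parts := a.support.val.map a
      parts_pos := by simp +contextual [Nat.pos_iff_ne_zero]
      parts_sum := hN }
  have hsupp : a.support = Finset.range a.support.card :=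
    eq_range_card_of_forall_le_mem fun j hj k hkj => by
      rw [Finsupp.mem_support_iff] at hj ⊢
      have := ha hkj
      omega
  set n := a.support.card
  have hparts : lam.parts = ((List.range n).map a : List ℕ) := by
    simp only [lam, hsupp]
    rfl
  refine ⟨lam, Finsupp.ext fun i => ?_⟩
  rw [rows_apply, rowLen_eq_getD _ hparts]
  · rcases lt_or_ge i n with hi | hi
    · simp [hi]
    · rw [List.getD_eq_default _ _ (by simpa using hi)]
      exact (Finsupp.notMem_support_iff.1 (by simpa [hsupp] using hi)).symm
  · exact List.pairwise_map.2 (List.pairwise_lt_range.imp fun hij => ha hij.le)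

lemma rows_twoOne_apply (a b i : ℕ) :
    rows (twoOne a b) i = if i < a then 2 else if i < a + b then 1 else 0 := by
  rw [rows_apply, rowLen_eq_getD (L := List.replicate a 2 ++ List.replicate b 1)]
  · simp only [List.getD_eq_getElem?_getD, List.getElem?_append, List.getElem?_replicate,
      List.length_replicate]
    split_ifs <;> first | rfl | omega
  · refine List.pairwise_append.2 ⟨List.pairwise_replicate_of_refl,
      List.pairwise_replicate_of_refl, fun x hx y hy => ?_⟩
    rw [List.eq_of_mem_replicate hx, List.eq_of_mem_replicate hy]
    exact one_le_two
  · rw [← Multiset.coe_add, Multiset.coe_replicate, Multiset.coe_replicate]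
    rfl

/-! ### Monomial coefficients of Schur functions -/

/-- The exponent vector of the monomial `∏ i, x_{i+1} ^ ν i`: the variable `x_0` of `XCoeff` and
`schurFn` never occurs. -/
def expVec (ν : ℕ → ℕ) : ℕ → ℕ
  | 0 => 0
  | i + 1 => ν i

lemma exists_expVec_of_card_fiber {X : Type*} [Finite X] {t : X → ℕ} (ht : ∀ x, 0 < t x)
    {μ : ℕ → ℕ} (hμ : ∀ i, Nat.card {x // t x = i} = μ i) :
    ∃ ν : ℕ →₀ ℕ, μ = expVec ν ∧ ν.degree = Nat.card X := by
  cases nonempty_fintype X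
  refine ⟨∑ x, Finsupp.single (t x - 1) 1, funext fun i => ?_, ?_⟩
  · rw [← hμ i]
    cases i with
    | zero =>
      have : IsEmpty {x // t x = 0} := ⟨fun x => (ht x.1).ne' x.2⟩
      exact Nat.card_of_isEmpty
    | succ i =>
      rw [Nat.subtype_card (Finset.univ.filter fun x => t x = i + 1) (by simp), expVec,
        Finsupp.finsetSum_apply, Finset.card_filter]
      refine Finset.sum_congr rfl fun x _ => ?_
      have := ht x
      rw [Finsupp.single_apply]
      split_ifs <;> omega
  · simp [map_sum]

lemma mem_diag_iff {N : ℕ} {lam : Nat.Partition N} {c : Cell} :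
    c ∈ diag lam ↔ c ∈ cells (rows lam) := by
  rw [mem_cells]
  rfl

lemma isSSYT_iff_isTableau {N : ℕ} {lam : Nat.Partition N} {t : Cell → ℕ} :
    IsSSYT lam t ↔ IsTableau (rows lam) t := by
  simp only [IsSSYT, mem_diag_iff]
  exact ⟨fun ⟨h₁, h₂, h₃, h₄⟩ => ⟨h₁, h₂, h₃, h₄⟩, fun ⟨h₁, h₂, h₃, h₄⟩ => ⟨h₁, h₂, h₃, h₄⟩⟩

lemma mem_tableaux_iff {ν : ℕ → ℕ} {n : ℕ} (hn : ∀ i, n ≤ i → ν i = 0) {a : ℕ →₀ ℕ}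
    {t : Cell → ℕ} : t ∈ tableaux ν n a ↔
      IsTableau a t ∧ ∀ i, ((cells a).filter fun c => t c = i).card = expVec ν i := by
  refine and_congr_right fun ht => ⟨fun ⟨hle, hν⟩ i => ?_, fun h => ⟨fun c => ?_, fun i _ => h _⟩⟩
  · rcases i with - | i
    · exact Finset.card_eq_zero.2 (Finset.filter_eq_empty_iff.2 fun c hc => (ht.pos c hc).ne')
    · rcases lt_or_ge i n with hi | hi
      · exact hν i hi
      · rw [expVec, hn i hi, Finset.card_eq_zero, Finset.filter_eq_empty_iff]
        exact fun c _ => ((hle c).trans_lt (Nat.lt_succ_of_le hi)).ne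
  · by_contra! hc
    obtain ⟨i, hi⟩ := Nat.exists_eq_add_one_of_ne_zero (Nat.ne_zero_of_lt hc)
    have hmem : c ∈ cells a := not_not.1 fun hmem => by
      rw [ht.eq_zero c hmem] at hi
      omega
    have hzero := h (i + 1)
    rw [expVec, hn i (by omega), Finset.card_eq_zero, Finset.filter_eq_empty_iff] at hzero
    exact hzero hmem hi

lemma card_diag_fiber {N : ℕ} (lam : Nat.Partition N) (t : Cell → ℕ) (i : ℕ) :
    Nat.card {c : Cell // c ∈ diag lam ∧ t c = i} =
      ((cells (rows lam)).filter fun c => t c = i).card :=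
  Nat.subtype_card _ fun _ => by rw [Finset.mem_filter, mem_diag_iff]

lemma schurFn_expVec {N : ℕ} (lam : Nat.Partition N) {ν : ℕ → ℕ} {n : ℕ}
    (hn : ∀ i, n ≤ i → ν i = 0) : schurFn lam (expVec ν) = kostka ν n (rows lam) := by
  rw [schurFn, ← ncard_tableaux ν n (rows_antitone lam), ← Nat.card_coe_set_eq]
  congr 1
  refine Nat.card_congr (Equiv.subtypeEquivRight fun t => ?_)
  rw [mem_tableaux_iff hn, isSSYT_iff_isTableau]
  simp only [card_diag_fiber]

lemma exists_expVec_of_schurFn_ne_zero {N : ℕ} {lam : Nat.Partition N} {μ : ℕ → ℕ}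
    (h : schurFn lam μ ≠ 0) : ∃ ν : ℕ →₀ ℕ, μ = expVec ν ∧ ν.degree = N := by
  obtain ⟨⟨t, ht, hμ⟩⟩ := (Nat.card_ne_zero.1 (Nat.cast_ne_zero.1 h)).1
  rw [isSSYT_iff_isTableau] at ht
  obtain ⟨ν, rfl, hν⟩ := exists_expVec_of_card_fiber (X := cells (rows lam)) (t := fun c => t c)
    (μ := μ) (fun c => ht.pos c c.2) fun i => by
      simp only [← hμ, mem_diag_iff]
      exact Nat.card_congr (Equiv.subtypeSubtypeEquivSubtypeInter (· ∈ cells (rows lam)) (t · = i))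
  exact ⟨ν, rfl, by rw [hν, Nat.card_eq_finsetCard, card_cells, degree_rows]⟩

/-! ### Schur expansions -/

/-- The symmetric functions homogeneous of degree `N`, as monomial-coefficient functions.
Invariance is only asked of adjacent transpositions of variables, which generate all finitary
permutations. -/
structure IsSymmetricOfDegree (f : (ℕ → ℕ) → ℚ) (N : ℕ) : Prop where
  exists_expVec : ∀ μ, f μ ≠ 0 → ∃ ν : ℕ →₀ ℕ, μ = expVec ν ∧ ν.degree = N
  swap : ∀ (ν : ℕ →₀ ℕ) (i : ℕ), f (expVec (ν ∘ Equiv.swap i (i + 1))) = f (expVec ν)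

lemma isSymmetricOfDegree_schurFn {N : ℕ} (lam : Nat.Partition N) :
    IsSymmetricOfDegree (schurFn lam) N where
  exists_expVec _ := exists_expVec_of_schurFn_ne_zero
  swap ν i := by
    obtain ⟨n, hn⟩ := exists_forall_ge_apply_eq_zero ν
    have hν : ∀ j, n + (i + 2) ≤ j → ν j = 0 := fun j hj => hn j (by omega)
    rw [schurFn_expVec lam hν, ← kostka_comp_swap ν (Nat.le_add_left (i + 2) n),
      schurFn_expVec lam fun j hj => ?_]
    rw [Function.comp_apply, Equiv.swap_apply_of_ne_of_ne (by omega) (by omega), hν j hj]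

lemma isSymmetricOfDegree_sum_schurFn {N : ℕ} (c : Nat.Partition N → ℚ) :
    IsSymmetricOfDegree (fun μ => ∑ κ, c κ * schurFn κ μ) N where
  exists_expVec μ h := by
    obtain ⟨κ, -, hκ⟩ := Finset.exists_ne_zero_of_sum_ne_zero h
    exact exists_expVec_of_schurFn_ne_zero (right_ne_zero_of_mul hκ)
  swap ν i := by simp only [(isSymmetricOfDegree_schurFn _).swap]

lemma swap_add_single (ν : ℕ →₀ ℕ) {i : ℕ} (h : ν i ≤ ν (i + 1)) :
    ν.equivMapDomain (Equiv.swap i (i + 1)) + Finsupp.single (i + 1) (ν (i + 1) - ν i) =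
      ν + Finsupp.single i (ν (i + 1) - ν i) := by
  ext j
  simp only [Finsupp.add_apply, Finsupp.equivMapDomain_apply, Equiv.symm_swap, Finsupp.single_apply]
  rcases eq_or_ne j i with rfl | hi
  · simp [h]
  rcases eq_or_ne j (i + 1) with rfl | hi'
  · simp [h]
  · simp [Equiv.swap_apply_of_ne_of_ne hi hi', hi.symm, hi'.symm]

lemma induction_on_antitone {p : (ℕ →₀ ℕ) → Prop} (antitone : ∀ ν : ℕ →₀ ℕ, Antitone ν → p ν)
    (swap : ∀ ν i, ν i < ν (i + 1) → p (ν.equivMapDomain (Equiv.swap i (i + 1))) → p ν)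
    (ν : ℕ →₀ ℕ) : p ν := by
  induction hr : rank ν using Nat.strong_induction_on generalizing ν with
  | _ r ih =>
    by_cases hν : Antitone ν
    · exact antitone ν hν
    · obtain ⟨i, hi⟩ : ∃ i, ν i < ν (i + 1) := by
        by_contra! h
        exact hν (antitone_nat_of_succ_le h)
      have hrank := congrArg rank (swap_add_single ν hi.le)
      rw [rank_add, rank_add, rank_single, rank_single, mul_add, mul_one] at hrank
      exact swap ν i hi (ih _ (by omega) _ rfl)

lemma IsSymmetricOfDegree.ext {f g : (ℕ → ℕ) → ℚ} {N : ℕ} (hf : IsSymmetricOfDegree f N)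
    (hg : IsSymmetricOfDegree g N)
    (h : ∀ lam : Nat.Partition N, f (expVec (rows lam)) = g (expVec (rows lam))) : f = g := by
  have key : ∀ ν : ℕ →₀ ℕ, ν.degree = N → f (expVec ν) = g (expVec ν) := fun ν => by
    induction ν using induction_on_antitone with
    | antitone ν hν =>
      intro hN
      obtain ⟨lam, rfl⟩ := exists_rows_eq hν hN
      exact h lam
    | swap ν i hi ih =>
      intro hN
      have hdeg := congrArg Finsupp.degree (swap_add_single ν hi.le)
      rw [map_add Finsupp.degree, map_add Finsupp.degree, Finsupp.degree_single,
        Finsupp.degree_single, hN] at hdeg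
      rw [← hf.swap ν i, ← hg.swap ν i]
      exact ih (Nat.add_right_cancel hdeg)
  funext μ
  by_contra hne
  rcases ne_or_eq (f μ) 0 with hfμ | hfμ
  · obtain ⟨ν, rfl, hν⟩ := hf.exists_expVec μ hfμ
    exact hne (key ν hν)
  · obtain ⟨ν, rfl, hν⟩ := hg.exists_expVec μ (hfμ ▸ Ne.symm hne)
    exact hne (key ν hν)

lemma eq_zero_of_sum_schurFn_eq_zero {N k : ℕ} {c : Nat.Partition N → ℚ}
    (h : ∀ ν : Nat.Partition N, rows ν k = 0 →
      ∑ κ, c κ * schurFn κ (expVec (rows ν)) = 0)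
    {ν : Nat.Partition N} (hν : rows ν k = 0) : c ν = 0 := by
  induction hr : rank (rows ν) using Nat.strong_induction_on generalizing ν with
  | _ r ih =>
    have hk : ∀ i, k ≤ i → rows ν i = 0 := fun i hi =>
      Nat.le_zero.1 (hν ▸ rows_antitone ν hi)
    have hrank : rank (rows ν) = ∑ i ∈ Finset.range k, rows ν i * i := by
      rw [rank_eq_sum]
      exact Finsupp.sum_of_support_subset _ (fun i hi => Finset.mem_range.2 <| not_le.1 fun hle =>
        Finsupp.mem_support_iff.1 hi (hk i hle)) _ fun _ _ => zero_mul _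
    have hsum := h ν hν
    rw [Finset.sum_eq_single_of_mem ν (Finset.mem_univ ν), schurFn_expVec ν hk] at hsum
    · exact (mul_eq_zero.1 hsum).resolve_right
        (Nat.cast_ne_zero.2 (kostka_self_ne_zero (rows_antitone ν) hk))
    · intro κ _ hκν
      by_contra hne
      rw [schurFn_expVec κ hk] at hne
      have hkostka := Nat.cast_ne_zero.1 (right_ne_zero_of_mul hne)
      have hκ : ∀ i, k ≤ i → rows κ i = 0 := fun i => apply_eq_zero_of_kostka_ne_zero hkostka
      obtain ⟨hle, heq⟩ := rank_le_of_kostka_ne_zero hkostka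
      refine left_ne_zero_of_mul hne (ih _ (hr ▸ hrank ▸ lt_of_le_of_ne hle fun hrk => hκν ?_)
        (hκ k le_rfl) rfl)
      refine rows_injective (Finsupp.ext fun i => ?_)
      rcases lt_or_ge i k with hi | hi
      · exact heq hrk i hi
      · rw [hκ i hi, hk i hi]

lemma rows_apply_self {N : ℕ} (lam : Nat.Partition N) : rows lam N = 0 := by
  by_contra hne
  have hsub : Finset.range (N + 1) ⊆ (rows lam).support := fun i hi => by
    have := rows_antitone lam (Nat.lt_succ_iff.1 (Finset.mem_range.1 hi))
    rw [Finsupp.mem_support_iff]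
    omega
  have hcard := Finset.card_le_card hsub
  have hdeg := Finset.card_nsmul_le_sum (rows lam).support (rows lam) 1 fun i hi =>
    Nat.one_le_iff_ne_zero.2 (Finsupp.mem_support_iff.1 hi)
  rw [← Finsupp.degree_apply, degree_rows, smul_eq_mul, mul_one] at hdeg
  rw [Finset.card_range] at hcard
  omega

lemma IsSymmetricOfDegree.exists_sum_schurFn {f : (ℕ → ℕ) → ℚ} {N : ℕ}
    (hf : IsSymmetricOfDegree f N) :
    ∃ c : Nat.Partition N → ℚ, f = fun μ => ∑ κ, c κ * schurFn κ μ := by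
  let K : Matrix (Nat.Partition N) (Nat.Partition N) ℚ :=
    Matrix.of fun ν κ => schurFn κ (expVec (rows ν))
  have hK : ∀ c ν, K.mulVec c ν = ∑ κ, c κ * schurFn κ (expVec (rows ν)) := fun c ν => by
    simp only [K, Matrix.mulVec, dotProduct, Matrix.of_apply, mul_comm]
  have hinj : Function.Injective K.mulVec := by
    refine (injective_iff_map_eq_zero K.mulVecLin).2 fun c hc => funext fun κ => ?_
    exact eq_zero_of_sum_schurFn_eq_zero (fun ν _ => (hK c ν).symm.trans (congrFun hc ν))
      (rows_apply_self κ)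
  obtain ⟨c, hc⟩ := Matrix.mulVec_surjective_iff_isUnit.2
    (Matrix.mulVec_injective_iff_isUnit.1 hinj) fun ν => f (expVec (rows ν))
  exact ⟨c, hf.ext (isSymmetricOfDegree_sum_schurFn c) fun ν => by rw [← hK, hc]⟩

lemma sCoeff_sum_schurFn {N : ℕ} (c : Nat.Partition N → ℚ) :
    sCoeff (fun μ => ∑ κ, c κ * schurFn κ μ) = c := by
  have hsum : ∀ (d : Nat.Partition N →₀ ℚ) μ,
      (d.sum fun κ a => a * schurFn κ μ) = ∑ κ, d κ * schurFn κ μ := fun d μ =>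
    Finsupp.sum_fintype _ _ fun _ => zero_mul _
  have h : ∃ d : Nat.Partition N →₀ ℚ, ∀ μ,
      ∑ κ, c κ * schurFn κ μ = d.sum fun κ a => a * schurFn κ μ :=
    ⟨Finsupp.equivFunOnFinite.symm c, fun μ => by rw [hsum]; rfl⟩
  funext lam
  rw [sCoeff, dif_pos h, ← sub_eq_zero]
  refine eq_zero_of_sum_schurFn_eq_zero (c := fun κ => h.choose κ - c κ) (fun ν _ => ?_)
    (rows_apply_self lam)
  simp only [sub_mul, Finset.sum_sub_distrib]
  rw [← hsum, ← h.choose_spec, sub_self]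

lemma IsSymmetricOfDegree.eq_sum_sCoeff {f : (ℕ → ℕ) → ℚ} {N : ℕ}
    (hf : IsSymmetricOfDegree f N) (μ : ℕ → ℕ) :
    f μ = ∑ κ : Nat.Partition N, sCoeff f κ * schurFn κ μ := by
  obtain ⟨c, rfl⟩ := hf.exists_sum_schurFn
  rw [sCoeff_sum_schurFn]

lemma IsSymmetricOfDegree.sCoeff_eq_zero {f : (ℕ → ℕ) → ℚ} {N k : ℕ}
    (hf : IsSymmetricOfDegree f N)
    (h : ∀ ν : ℕ →₀ ℕ, (∀ i, k ≤ i → ν i = 0) → f (expVec ν) = 0)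
    {lam : Nat.Partition N} (hlam : rows lam k = 0) : sCoeff f lam = 0 :=
  eq_zero_of_sum_schurFn_eq_zero (fun ν hν => hf.eq_sum_sCoeff _ ▸ h _ fun _ hi =>
    Nat.le_zero.1 (hν ▸ rows_antitone ν hi)) hlam

/-- The Young diagram of `lam` arises from that of `κ` by adding one box. -/
def AddsBox {M N : ℕ} (κ : Nat.Partition M) (lam : Nat.Partition N) : Prop :=
  ∃ i, rows lam = rows κ + Finsupp.single i 1

lemma sum_kostka_addsBox {M N : ℕ} (hN : N = M + 1) (κ : Nat.Partition M) (ν : ℕ → ℕ) (n : ℕ) :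
    (∑ lam : Nat.Partition N, if AddsBox κ lam then kostka ν n (rows lam) else 0) =
      ∑ i ∈ Finset.range n, kostka ν n (rows κ + Finsupp.single i 1) := by
  choose! row hrow using fun (lam : Nat.Partition N) (h : AddsBox κ lam) => h
  rw [← Finset.sum_filter]
  refine Finset.sum_bij_ne_zero (fun lam _ _ => row lam)
    (fun lam hlam hne => ?_) (fun lam hlam _ lam' hlam' _ heq => rows_injective ?_)
    (fun i _ hne => ?_) (fun lam hlam _ => ?_)
  · rw [hrow lam (Finset.mem_filter.1 hlam).2] at hne
    by_contra hi
    have hzero := apply_eq_zero_of_kostka_ne_zero hne (not_lt.1 (mt Finset.mem_range.2 hi))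
    rw [Finsupp.add_apply, Finsupp.single_eq_same] at hzero
    omega
  · rw [hrow lam (Finset.mem_filter.1 hlam).2, hrow lam' (Finset.mem_filter.1 hlam').2, heq]
  · obtain ⟨lam, hlam⟩ := exists_rows_eq (N := N) (antitone_of_kostka_ne_zero hne)
      (by rw [map_add, degree_rows, Finsupp.degree_single, hN])
    have hadds : AddsBox κ lam := ⟨i, hlam⟩
    refine ⟨lam, Finset.mem_filter.2 ⟨Finset.mem_univ _, hadds⟩, hlam ▸ hne, ?_⟩
    exact Finsupp.single_left_injective one_ne_zero
      (add_left_cancel ((hrow lam hadds).symm.trans hlam))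
  · rw [← hrow lam (Finset.mem_filter.1 hlam).2]

lemma sum_schurFn_sub_single {M N : ℕ} (hN : N = M + 1) (κ : Nat.Partition M) (ν : ℕ →₀ ℕ) :
    ∑ i ∈ ν.support, schurFn κ (expVec (⇑ν - Pi.single i 1)) =
      ∑ lam : Nat.Partition N, if AddsBox κ lam then schurFn lam (expVec ν) else 0 := by
  obtain ⟨n, hn⟩ := exists_forall_ge_apply_eq_zero ν
  have hsub : ∀ i j, n ≤ j → (⇑ν - Pi.single i 1 : ℕ → ℕ) j = 0 := fun i j hj =>
    Nat.le_zero.1 (hn j hj ▸ Nat.sub_le _ _)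
  have hsupp : ν.support = (Finset.range n).filter fun i => 0 < ν i := by
    ext i
    rw [Finsupp.mem_support_iff, Finset.mem_filter, Finset.mem_range, Nat.pos_iff_ne_zero]
    exact ⟨fun hi => ⟨not_le.1 fun hle => hi (hn i hle), hi⟩, And.right⟩
  simp only [schurFn_expVec κ (hsub _), schurFn_expVec _ hn, hsupp, Finset.sum_filter]
  exact_mod_cast (sum_kostka_add_single (rows_antitone κ) ν n).symm.trans
    (sum_kostka_addsBox hN κ ν n).symm

theorem sCoeff_eq_sum_addsBox {f g : (ℕ → ℕ) → ℚ} {M N : ℕ} (hf : IsSymmetricOfDegree f M)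
    (hg : IsSymmetricOfDegree g N) (hN : N = M + 1)
    (h : ∀ ν : ℕ →₀ ℕ, g (expVec ν) = ∑ i ∈ ν.support, f (expVec (⇑ν - Pi.single i 1)))
    (lam : Nat.Partition N) :
    sCoeff g lam = ∑ κ : Nat.Partition M, if AddsBox κ lam then sCoeff f κ else 0 := by
  suffices g = fun μ => ∑ lam : Nat.Partition N,
      (∑ κ : Nat.Partition M, if AddsBox κ lam then sCoeff f κ else 0) * schurFn lam μ by
    conv_lhs => rw [this]
    rw [sCoeff_sum_schurFn]
  refine hg.ext (isSymmetricOfDegree_sum_schurFn _) fun ν => ?_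
  calc g (expVec (rows ν))
      = ∑ i ∈ (rows ν).support, ∑ κ : Nat.Partition M,
          sCoeff f κ * schurFn κ (expVec (⇑(rows ν) - Pi.single i 1)) := by
        simp only [h, ← hf.eq_sum_sCoeff]
    _ = ∑ κ : Nat.Partition M, sCoeff f κ * ∑ lam : Nat.Partition N,
          if AddsBox κ lam then schurFn lam (expVec (rows ν)) else 0 := by
        simp only [← sum_schurFn_sub_single hN, Finset.mul_sum]
        exact Finset.sum_comm
    _ = _ := by
        simp only [Finset.mul_sum, Finset.sum_mul, ite_mul, mul_ite, zero_mul, mul_zero]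
        exact Finset.sum_comm

/-! ### Monomial coefficients of chromatic symmetric functions -/

section Chromatic

variable {V : Type*}

/-- The proper colorings of `G` contributing to the monomial with exponents `μ` in `X_G`. -/
def colorings (G : SimpleGraph V) (μ : ℕ → ℕ) : Set (V → ℕ) :=
  {f | IsProperColoring G f ∧ ∀ i, Nat.card {v // f v = i} = μ i}

lemma XCoeff_eq_ncard [Fintype V] (G : SimpleGraph V) (μ : ℕ → ℕ) :
    XCoeff G μ = (colorings G μ).ncard := rfl

lemma apply_ne_of_mem_colorings [Finite V] {G : SimpleGraph V} {μ : ℕ → ℕ} {f : V → ℕ}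
    (hf : f ∈ colorings G μ) {i : ℕ} (hi : μ i = 0) (v : V) : f v ≠ i := by
  have := Finite.card_eq_zero_iff.1 ((hf.2 i).trans hi)
  exact fun hv => this.false ⟨v, hv⟩

lemma lt_of_mem_colorings [Finite V] {G : SimpleGraph V} {ν : ℕ → ℕ} {f : V → ℕ}
    (hf : f ∈ colorings G (expVec ν)) {n : ℕ} (hn : ∀ i, n ≤ i → ν i = 0) (v : V) :
    f v - 1 < n := by
  by_contra! hle
  exact apply_ne_of_mem_colorings hf (i := f v - 1 + 1) (hn (f v - 1) hle) v
    (Nat.sub_add_cancel (hf.1.1 v)).symm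

lemma finite_colorings_expVec [Finite V] (G : SimpleGraph V) (ν : ℕ →₀ ℕ) :
    (colorings G (expVec ν)).Finite := by
  cases nonempty_fintype V
  obtain ⟨n, hn⟩ := exists_forall_ge_apply_eq_zero ν
  refine (Set.finite_Icc 0 fun _ => n).subset fun f hf => ⟨fun v => Nat.zero_le _, fun v => ?_⟩
  exact Nat.le_of_pred_lt (lt_of_mem_colorings hf hn v)

lemma expVec_comp_swap (ν : ℕ → ℕ) (i : ℕ) :
    expVec (ν ∘ Equiv.swap i (i + 1)) = expVec ν ∘ Equiv.swap (i + 1) (i + 2) := by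
  funext j
  rcases j with - | j
  · rfl
  · simp only [expVec, Function.comp_apply, Equiv.swap_apply_def, Nat.add_right_cancel_iff]
    split_ifs <;> rfl

lemma comp_mem_colorings_iff {G : SimpleGraph V} {μ : ℕ → ℕ} {π : Equiv.Perm ℕ} (hπ : π 0 = 0)
    {f : V → ℕ} : π ∘ f ∈ colorings G μ ↔ f ∈ colorings G (μ ∘ π) := by
  have hπ' : ∀ k, π k = 0 ↔ k = 0 := fun k => by
    conv_lhs => rw [← hπ, π.injective.eq_iff]
  simp only [colorings, Set.mem_ofPred_eq, IsProperColoring, Function.comp_apply,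
    Nat.pos_iff_ne_zero, ne_eq, hπ', π.injective.eq_iff]
  refine and_congr_right fun _ => π.surjective.forall.trans ?_
  simp only [π.injective.eq_iff]

lemma ncard_colorings_comp (G : SimpleGraph V) (μ : ℕ → ℕ) {π : Equiv.Perm ℕ} (hπ : π 0 = 0) :
    (colorings G (μ ∘ π)).ncard = (colorings G μ).ncard :=
  Nat.card_congr (Equiv.subtypeEquiv ((Equiv.refl V).arrowCongr π) fun _ =>
    (comp_mem_colorings_iff hπ).symm)

lemma isSymmetricOfDegree_XCoeff [Fintype V] (G : SimpleGraph V) :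
    IsSymmetricOfDegree (XCoeff G) (Fintype.card V) where
  exists_expVec μ h := by
    obtain ⟨f, hf, hμ⟩ := Set.nonempty_of_ncard_ne_zero (Nat.cast_ne_zero.1 h)
    simpa only [Nat.card_eq_fintype_card] using exists_expVec_of_card_fiber hf.1 hμ
  swap ν i := by
    have hswap : Equiv.swap (i + 1) (i + 2) 0 = 0 :=
      Equiv.swap_apply_of_ne_of_ne (by omega) (by omega)
    rw [expVec_comp_swap, XCoeff_eq_ncard, ncard_colorings_comp G _ hswap, XCoeff_eq_ncard]

lemma XCoeff_expVec_eq_zero [Fintype V] {G : SimpleGraph V} {k : ℕ} (hG : ¬ G.Colorable k)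
    {ν : ℕ → ℕ} (hν : ∀ i, k ≤ i → ν i = 0) : XCoeff G (expVec ν) = 0 := by
  by_contra h
  obtain ⟨f, hf⟩ := Set.nonempty_of_ncard_ne_zero (Nat.cast_ne_zero.1 h)
  refine hG ⟨SimpleGraph.Coloring.mk (fun v => ⟨f v - 1, lt_of_mem_colorings hf hν v⟩)
    fun {u v} huv heq => hf.1.2 u v huv ?_⟩
  have := hf.1.1 u
  have := hf.1.1 v
  have := Fin.mk.inj heq
  omega

/-! ### Adding an isolated vertex -/

lemma isProperColoring_disjUnion_K1_iff {G : SimpleGraph V} {f : V → ℕ} {c : ℕ} :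
    IsProperColoring (disjUnion G K1) (Sum.elim f fun _ => c) ↔
      IsProperColoring G f ∧ 0 < c := by
  have hadj : ∀ u v, (disjUnion G K1).Adj (Sum.inl u) (Sum.inl v) ↔ G.Adj u v := fun u v => by
    simpa [disjUnion, G.adj_comm v u] using fun h : G.Adj u v => h.ne
  have hiso : ∀ u i, ¬ (disjUnion G K1).Adj u (Sum.inr i) := by
    rintro (u | u) i <;> simp [disjUnion, K1]
  simp only [IsProperColoring, Sum.forall, Sum.elim_inl, Sum.elim_inr, hadj, hiso,
    (disjUnion G K1).adj_comm (Sum.inr _), forall_const, false_imp_iff, implies_true, and_true]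
  tauto

lemma card_fiber_elim [Finite V] (f : V → ℕ) (c i : ℕ) :
    Nat.card {v : V ⊕ Fin 1 // Sum.elim f (fun _ => c) v = i} =
      Nat.card {v // f v = i} + if i = c then 1 else 0 := by
  rw [Nat.card_congr Equiv.subtypeSum, Nat.card_sum]
  congr 1
  simp only [Sum.elim_inr]
  split_ifs with h
  · subst h
    simp
  · exact Finite.card_eq_zero_iff.2 ⟨fun v => h v.2.symm⟩

lemma elim_mem_colorings_iff [Finite V] {G : SimpleGraph V} {ν : ℕ → ℕ} {f : V → ℕ}
    {i : ℕ} :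
    Sum.elim f (fun _ => i + 1) ∈ colorings (disjUnion G K1) (expVec ν) ↔
      ν i ≠ 0 ∧ f ∈ colorings G (expVec (ν - Pi.single i 1)) := by
  have hexp : ∀ j, expVec (ν - Pi.single i 1) j = expVec ν j - if j = i + 1 then 1 else 0 := by
    rintro (- | j)
    · rfl
    · simp [expVec, Pi.single_apply]
  simp only [colorings, Set.mem_ofPred_eq, isProperColoring_disjUnion_K1_iff, card_fiber_elim, hexp,
    Nat.succ_pos, and_true]
  rw [← and_left_comm]
  refine and_congr_right fun _ => ⟨fun h => ?_, fun ⟨hi, h⟩ j => ?_⟩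
  · have hi := h (i + 1)
    rw [if_pos rfl] at hi
    exact ⟨fun h0 => Nat.succ_ne_zero _ (hi.trans h0), fun j => by rw [← h j, Nat.add_sub_cancel]⟩
  · rw [h j]
    split_ifs with hj
    · subst hj
      exact Nat.sub_add_cancel (Nat.pos_of_ne_zero hi)
    · rfl

lemma XCoeff_disjUnion_K1 [Fintype V] (G : SimpleGraph V) (ν : ℕ →₀ ℕ) :
    XCoeff (disjUnion G K1) (expVec ν) =
      ∑ i ∈ ν.support, XCoeff G (expVec (⇑ν - Pi.single i 1)) := by
  have hfin : ∀ i, Finite (colorings G (expVec (⇑ν - Pi.single i 1))) := fun i => by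
    rw [← Finsupp.single_eq_pi_single, ← Finsupp.coe_tsub]
    exact (finite_colorings_expVec G _).to_subtype
  simp only [XCoeff_eq_ncard, ← Nat.card_coe_set_eq, ← Nat.cast_sum]
  rw [← Finset.sum_coe_sort, ← Nat.card_sigma]
  congr 1
  refine (Nat.card_congr (Equiv.ofBijective (fun p => ⟨Sum.elim p.2.1 fun _ => p.1.1 + 1,
    elim_mem_colorings_iff.2 ⟨Finsupp.mem_support_iff.1 p.1.2, p.2.2⟩⟩) ⟨?_, ?_⟩)).symm
  · rintro ⟨⟨i, hi⟩, f, hf⟩ ⟨⟨j, hj⟩, g, hg⟩ h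
    have hF := congrFun (Subtype.mk.inj h)
    obtain rfl : i = j := Nat.succ_injective (hF (Sum.inr 0))
    obtain rfl : f = g := funext fun v => hF (Sum.inl v)
    rfl
  · rintro ⟨F, hF⟩
    obtain ⟨i, hi⟩ := Nat.exists_eq_add_one.2 (hF.1.1 (Sum.inr 0))
    have helim : Sum.elim (F ∘ Sum.inl) (fun _ => i + 1) = F := by
      rw [← hi]
      exact funext (Sum.rec (fun _ => rfl) fun x => by rw [Subsingleton.elim x 0]; rfl)
    obtain ⟨hνi, hf⟩ := elim_mem_colorings_iff.1 (helim.symm ▸ hF)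
    exact ⟨⟨⟨i, Finsupp.mem_support_iff.2 hνi⟩, _, hf⟩, Subtype.ext helim⟩

end Chromatic

/-! ### Two-column shapes -/

lemma rows_twoOne_succ (C D : ℕ) :
    rows (twoOne (C + 1) D) = rows (twoOne C (D + 1)) + Finsupp.single C 1 := by
  ext i
  rw [Finsupp.add_apply, rows_twoOne_apply, rows_twoOne_apply, Finsupp.single_apply]
  split_ifs <;> omega

lemma rows_eq_of_addsBox_twoOne {N C D : ℕ} {κ : Nat.Partition N}
    (h : AddsBox κ (twoOne (C + 1) D)) (hκ : rows κ (C + D) ≠ 0) :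
    rows κ = rows (twoOne C (D + 1)) := by
  obtain ⟨i, hi⟩ := h
  suffices i = C from add_right_cancel (hi.symm.trans (this ▸ rows_twoOne_succ C D))
  have happly : ∀ j, _ = rows κ j + _ := fun j => DFunLike.congr_fun hi j
  simp only [rows_twoOne_apply, Finsupp.single_apply] at happly
  have hbox := happly i
  have hnext := happly (i + 1)
  have hlast := happly (C + D)
  have hanti : rows κ (i + 1) ≤ rows κ i := rows_antitone κ i.le_succ
  have hanti' : i ≤ C + D → rows κ (C + D) ≤ rows κ i := fun h => rows_antitone κ h
  split_ifs at hbox hnext hlast <;> omega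

theorem schurCoeff_remove_isolated_vertex_general {V : Type*} [Fintype V] {G : SimpleGraph V}
    {C D : ℕ} (hV : Fintype.card V = 2 * C + (D + 1)) (hG : ¬ G.Colorable (C + D)) :
    sCoeff (XCoeff (disjUnion G K1)) (twoOne (C + 1) D) =
      sCoeff (XCoeff G) (twoOne C (D + 1)) := by
  have hG₁ := isSymmetricOfDegree_XCoeff G
  have hG₂ := isSymmetricOfDegree_XCoeff (disjUnion G K1)
  have hdeg : 2 * C + (D + 1) + 1 = 2 * (C + 1) + D := by omega
  rw [Fintype.card_sum, Fintype.card_fin, hV, hdeg] at hG₂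
  rw [hV] at hG₁
  rw [sCoeff_eq_sum_addsBox hG₁ hG₂ hdeg.symm (XCoeff_disjUnion_K1 G),
    Finset.sum_eq_single_of_mem (twoOne C (D + 1)) (Finset.mem_univ _) fun κ _ hκ => ?_,
    if_pos ⟨C, rows_twoOne_succ C D⟩]
  refine ite_eq_right_iff.2 fun hadds => ?_
  refine hG₁.sCoeff_eq_zero (k := C + D) (fun _ => XCoeff_expVec_eq_zero hG) ?_
  by_contra hrow
  exact hκ (rows_injective (rows_eq_of_addsBox_twoOne hadds hrow))

lemma not_colorable_genNet {n m k : ℕ} (h : k < n) : ¬ (genNet n m).Colorable k := fun hc => by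
  have hbody : Pairwise fun i j : Fin n => (genNet n m).Adj (Sum.inl i) (Sum.inl j) :=
    fun i j hij => ⟨Sum.inl_injective.ne hij, Or.inl trivial⟩
  have := hc.card_le_of_pairwise_adj _ hbody
  rw [Nat.card_fin] at this
  omega

/-- For `C ≥ 1` and `D ≥ 0`:
`[s_{(2^C,1^D)}] X_{GN_{C+D,C-1} ⊔ K₁} = [s_{(2^{C-1},1^{D+1})}] X_{GN_{C+D,C-1}}`. -/
theorem schurCoeff_remove_isolated_vertex (C D : ℕ) (hC : 1 ≤ C) :
    sCoeff (XCoeff (disjUnion (genNet (C + D) (C - 1)) K1)) (twoOne C D) =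
      sCoeff (XCoeff (genNet (C + D) (C - 1))) (twoOne (C - 1) (D + 1)) := by
  obtain ⟨C, rfl⟩ := Nat.exists_eq_add_of_le' hC
  exact schurCoeff_remove_isolated_vertex_general (by simp; omega) (not_colorable_genNet (by omega))
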